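/- Let φ : (0,∞)^d → ℝ (or ℝ^d ⊇ open set U → ℝ) be defined by φ(s) = ∫ w(t) exp(sᵀ t) dν(t) for an integrable function w. If φ(s) = 0 for all s in a nonempty open set U ⊆ ℝ^d on which the integral converges absolutely, then w = 0 ν-almost everywhere. -/

import Mathlib

/-!
After multiplying `w` by one of the exponentials we may assume `0 ∈ U`, so that `w` is integrable
and its positive and negative parts are densities of two finite measures with respect to `ν`. Along
each line through `0` the two measures have the same moment generating function near `0`. This
function extends analytically to a vertical strip containing the imaginary axis, on which it is the
characteristic function; hence the two measures coincide.
-/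

open MeasureTheory ProbabilityTheory Filter Topology

section ComplexMGF

variable {Ω Ω' : Type*} {mΩ : MeasurableSpace Ω} {mΩ' : MeasurableSpace Ω'}
  {μ : Measure Ω} {μ' : Measure Ω'} {X : Ω → ℝ} {Y : Ω' → ℝ}

lemma isFiniteMeasure_of_zero_mem_integrableExpSet (h : 0 ∈ integrableExpSet X μ) :
    IsFiniteMeasure μ := by
  simpa [integrableExpSet, integrable_const_iff] using h

lemma eqOn_complexMGF_of_mgf_eventuallyEq {x : ℝ}
    (hX : x ∈ interior (integrableExpSet X μ)) (hY : x ∈ interior (integrableExpSet Y μ'))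
    (h : mgf X μ =ᶠ[𝓝 x] mgf Y μ') :
    Set.EqOn (complexMGF X μ) (complexMGF Y μ')
      {z | z.re ∈ interior (integrableExpSet X μ) ∩ interior (integrableExpSet Y μ')} := by
  have hconvex : Convex ℝ (interior (integrableExpSet X μ) ∩ interior (integrableExpSet Y μ')) :=
    convex_integrableExpSet.interior.inter convex_integrableExpSet.interior
  have hreal : ∀ᶠ y : ℝ in 𝓝[≠] x, complexMGF X μ y = complexMGF Y μ' y := by
    filter_upwards [h.filter_mono nhdsWithin_le_nhds] with y hy
    rw [complexMGF_ofReal, complexMGF_ofReal, hy]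
  have hofReal : Tendsto ((↑) : ℝ → ℂ) (𝓝[≠] x) (𝓝[≠] (x : ℂ)) :=
    Complex.continuous_ofReal.continuousWithinAt.tendsto_nhdsWithin fun _ hy ↦ by simpa using hy
  exact AnalyticOnNhd.eqOn_of_preconnected_of_frequently_eq
    (analyticOnNhd_complexMGF.mono fun _ hz ↦ hz.1) (analyticOnNhd_complexMGF.mono fun _ hz ↦ hz.2)
    (hconvex.linear_preimage Complex.reLm).isPreconnected (z₀ := (x : ℂ)) (by simp [hX, hY])
    (hofReal.frequently hreal.frequently)

end ComplexMGF

section WithDensity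

variable {α F : Type*} {mα : MeasurableSpace α} {ν : Measure α} {f : α → ℝ}
  [NormedAddCommGroup F] [NormedSpace ℝ F] {g : α → F}

lemma integrable_withDensity_ofReal (hf : AEMeasurable f ν)
    (hfg : Integrable (fun a ↦ f a • g a) ν) :
    Integrable g (ν.withDensity fun a ↦ ENNReal.ofReal (f a)) := by
  rw [integrable_withDensity_iff_integrable_smul₀' hf.ennreal_ofReal (by simp)]
  have hpos : NullMeasurableSet {a | 0 < f a} ν := nullMeasurableSet_lt aemeasurable_const hf
  refine (hfg.indicator₀ hpos).congr (ae_of_all _ fun a ↦ ?_)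
  rcases lt_or_ge 0 (f a) with ha | ha
  · simp [ha, ha.le]
  · simp [ha.not_gt, ENNReal.ofReal_of_nonpos ha]

lemma integral_withDensity_ofReal_sub_integral_withDensity_ofReal_neg (hf : AEMeasurable f ν)
    (hfg : Integrable (fun a ↦ f a • g a) ν) :
    ∫ a, g a ∂(ν.withDensity fun a ↦ ENNReal.ofReal (f a)) -
      ∫ a, g a ∂(ν.withDensity fun a ↦ ENNReal.ofReal (-f a)) = ∫ a, f a • g a ∂ν := by
  have hpos := integrable_withDensity_ofReal hf hfg
  have hneg := integrable_withDensity_ofReal (f := fun a ↦ -f a) hf.neg (by simpa using hfg.neg)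
  rw [integrable_withDensity_iff_integrable_smul₀' (by fun_prop) (by simp)] at hpos hneg
  rw [integral_withDensity_eq_integral_toReal_smul₀ (by fun_prop) (by simp),
    integral_withDensity_eq_integral_toReal_smul₀ (by fun_prop) (by simp),
    ← integral_sub hpos hneg]
  simp only [ENNReal.toReal_ofReal', ← sub_smul, max_zero_sub_max_neg_zero_eq_self]

lemma ae_eq_zero_of_withDensity_ofReal_eq_neg (hf : Integrable f ν)
    (h : ν.withDensity (fun a ↦ ENNReal.ofReal (f a)) =
      ν.withDensity fun a ↦ ENNReal.ofReal (-f a)) :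
    f =ᵐ[ν] 0 := by
  have hparts := (withDensity_eq_iff hf.aemeasurable.ennreal_ofReal
    hf.neg.aemeasurable.ennreal_ofReal hf.lintegral_lt_top.ne).1 h
  filter_upwards [hparts] with a ha
  have hmax : max (f a) 0 = max (-f a) 0 := by
    simpa only [Pi.neg_apply, ENNReal.toReal_ofReal'] using congrArg ENNReal.toReal ha
  rw [Pi.zero_apply, ← max_zero_sub_max_neg_zero_eq_self (f a), hmax, sub_self]

end WithDensity

section Banach

variable {E : Type*} [NormedAddCommGroup E] [NormedSpace ℝ E] [CompleteSpace E]
  [SecondCountableTopology E] [MeasurableSpace E] [BorelSpace E]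

lemma measure_ext_of_mgf_dual_eventuallyEq {μ μ' : Measure E}
    (hμ : ∀ L : StrongDual ℝ E, 0 ∈ interior (integrableExpSet L μ))
    (hμ' : ∀ L : StrongDual ℝ E, 0 ∈ interior (integrableExpSet L μ'))
    (h : ∀ L : StrongDual ℝ E, mgf L μ =ᶠ[𝓝 0] mgf L μ') :
    μ = μ' := by
  have := isFiniteMeasure_of_zero_mem_integrableExpSet (interior_subset (hμ 0))
  have := isFiniteMeasure_of_zero_mem_integrableExpSet (interior_subset (hμ' 0))
  refine Measure.ext_of_charFunDual (funext fun L ↦ ?_)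
  have hI : complexMGF L μ Complex.I = complexMGF L μ' Complex.I :=
    eqOn_complexMGF_of_mgf_eventuallyEq (hμ L) (hμ' L) (h L) (by simp [hμ L, hμ' L])
  simpa only [complexMGF, charFunDual_apply, mul_comm] using hI

variable {ν : Measure E}

lemma ae_eq_zero_of_eventually_integral_mul_exp_dual_eq_zero {f : E → ℝ}
    (hint : ∀ L : StrongDual ℝ E,
      ∀ᶠ x : ℝ in 𝓝 0, Integrable (fun t ↦ f t * Real.exp (x * L t)) ν)
    (hzero : ∀ L : StrongDual ℝ E, ∀ᶠ x : ℝ in 𝓝 0, ∫ t, f t * Real.exp (x * L t) ∂ν = 0) :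
    f =ᵐ[ν] 0 := by
  have hf : Integrable f ν := by simpa using (hint 0).self_of_nhds
  refine ae_eq_zero_of_withDensity_ofReal_eq_neg hf
    (measure_ext_of_mgf_dual_eventuallyEq (fun L ↦ ?_) (fun L ↦ ?_) fun L ↦ ?_)
  · rw [mem_interior_iff_mem_nhds]
    filter_upwards [hint L] with x hx using integrable_withDensity_ofReal hf.aemeasurable hx
  · rw [mem_interior_iff_mem_nhds]
    filter_upwards [hint L] with x hx using
      integrable_withDensity_ofReal hf.neg.aemeasurable (by simpa using hx.neg)
  · filter_upwards [hint L, hzero L] with x hx hx0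
    rw [← sub_eq_zero, mgf, mgf,
      integral_withDensity_ofReal_sub_integral_withDensity_ofReal_neg hf.aemeasurable hx]
    exact hx0

theorem laplace_transform_injective_general {w : E → ℝ}
    {U : Set (StrongDual ℝ E)} (hU : IsOpen U) (hUne : U.Nonempty)
    (hint : ∀ L ∈ U, Integrable (fun t ↦ w t * Real.exp (L t)) ν)
    (hzero : ∀ L ∈ U, ∫ t, w t * Real.exp (L t) ∂ν = 0) :
    w =ᵐ[ν] 0 := by
  obtain ⟨L₀, hL₀⟩ := hUne
  have hmem (L : StrongDual ℝ E) : ∀ᶠ x : ℝ in 𝓝 0, L₀ + x • L ∈ U := by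
    have hcont : ContinuousAt (fun x : ℝ ↦ L₀ + x • L) 0 := by fun_prop
    exact hcont.eventually_mem (hU.mem_nhds (by simpa using hL₀))
  have htilt (L : StrongDual ℝ E) (x : ℝ) (t : E) :
      w t * Real.exp (L₀ t) * Real.exp (x * L t) = w t * Real.exp ((L₀ + x • L) t) := by
    simp [mul_assoc, Real.exp_add]
  have htilted : (fun t ↦ w t * Real.exp (L₀ t)) =ᵐ[ν] 0 := by
    refine ae_eq_zero_of_eventually_integral_mul_exp_dual_eq_zero (fun L ↦ ?_) fun L ↦ ?_ <;>
      filter_upwards [hmem L] with x hx <;> simp only [htilt]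
    exacts [hint _ hx, hzero _ hx]
  filter_upwards [htilted] with t ht
  simpa using ht

end Banach

lemma strongDual_pi_apply_eq_sum_piRing_mul {𝕜 ι : Type*} [NontriviallyNormedField 𝕜]
    [CompleteSpace 𝕜] [Fintype ι] [DecidableEq ι] (L : StrongDual 𝕜 (ι → 𝕜)) (t : ι → 𝕜) :
    L t = ∑ i, ContinuousLinearEquiv.piRing (𝕜 := 𝕜) (E := 𝕜) ι L i * t i := by
  conv_lhs => rw [pi_eq_sum_univ' t]
  simp [mul_comm, ContinuousLinearEquiv.piRing]

/-- injectivity of the multivariate Laplace transform.  If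
`φ(s) = ∫ w(t) exp(sᵀ t) dν(t)` converges absolutely and vanishes for all `s` in a
nonempty open set `U ⊆ ℝ^d`, then `w = 0` ν-almost everywhere. -/
theorem laplace_transform_injective
    {d : ℕ} (ν : Measure (Fin d → ℝ)) [SigmaFinite ν]
    (w : (Fin d → ℝ) → ℝ) (hw : Measurable w)
    (U : Set (Fin d → ℝ)) (hU : IsOpen U) (hUne : U.Nonempty)
    (hint : ∀ s ∈ U, Integrable (fun t => w t * Real.exp (∑ i, s i * t i)) ν)
    (hzero : ∀ s ∈ U, ∫ t, w t * Real.exp (∑ i, s i * t i) ∂ν = 0) :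
    w =ᵐ[ν] 0 := by
  let e : StrongDual ℝ (Fin d → ℝ) ≃L[ℝ] (Fin d → ℝ) := ContinuousLinearEquiv.piRing (Fin d)
  refine laplace_transform_injective_general (hU.preimage e.continuous)
    (hUne.preimage e.surjective) ?_ ?_ <;> simp only [strongDual_pi_apply_eq_sum_piRing_mul]
  exacts [fun L ↦ hint (e L), fun L ↦ hzero (e L)]
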